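/- arXiv:2210.15806 — 2 statements merged into one kernel-verified Lean document; each statement's English description precedes it below -/
import Mathlib

section
/- Let G : ℝ^n → ℝ be differentiable, μ-strongly convex and L-smooth with 0 < μ ≤ L, and let the stepsize η > 0 satisfy η ≤ 2/(μ + L). Then for all x, y ∈ ℝ^n, ‖(x − η∇G(x)) − (y − η∇G(y))‖ ≤ (1 − μη)·‖x − y‖. -/
/-!
Subtracting the quadratic part, put `F = G - μ/2 ‖·‖²` with gradient `g = ∇G - μ·id`. Convexity of
`F` puts it above its tangent planes, and `L`-smoothness of `G` (the descent lemma) puts it below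
its tangent paraboloids of curvature `M = L - μ`. Comparing the two bounds at a gradient step from
one of the points gives cocoercivity, `‖g x - g y‖² ≤ M ⟪g x - g y, x - y⟫`.
The difference of the two gradient steps is `(1 - μη)(x - y) - η (g x - g y)`; expanding its square,
cocoercivity together with `η M ≤ 2 (1 - μη)`, i.e. `η ≤ 2 / (μ + L)`, makes all terms other than
`(1 - μη)² ‖x - y‖²` sum to something nonpositive.
-/

section Aux

variable {E : Type*} [NormedAddCommGroup E] [InnerProductSpace ℝ E]

/-- Cocoercivity of `g` when `F` lies above the affine functions with slopes `g x` touching it, and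
below the corresponding paraboloids of curvature `M`. The degenerate value `M = 0` is allowed. -/
lemma cocoercive_of_bounds (F : E → ℝ) (g : E → E) (M : ℝ) (hM : 0 ≤ M)
    (hlow : ∀ x z, F x + inner ℝ (g x) (z - x) ≤ F z)
    (hup : ∀ x z, F z ≤ F x + inner ℝ (g x) (z - x) + M / 2 * ‖z - x‖ ^ 2) (x y : E) :
    ‖g x - g y‖ ^ 2 ≤ M * inner ℝ (g x - g y) (x - y) := by
  -- The lower bound at `x` against the upper bound at `y`, both at the point `y - t (g y - g x)`.
  have half : ∀ (t : ℝ) (x y : E), F x + inner ℝ (g x) (y - x) + t * ‖g x - g y‖ ^ 2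
      - M / 2 * t ^ 2 * ‖g x - g y‖ ^ 2 ≤ F y := by
    intro t x y
    have h1 := hlow x (y + t • (g x - g y))
    have h2 := hup y (y + t • (g x - g y))
    have e1 : y + t • (g x - g y) - x = (y - x) + t • (g x - g y) := by abel
    have e2 : y + t • (g x - g y) - y = t • (g x - g y) := by abel
    have e3 : ‖g x - g y‖ ^ 2 = inner ℝ (g x) (g x - g y) - inner ℝ (g y) (g x - g y) := by
      rw [← inner_sub_left, real_inner_self_eq_norm_sq]
    rw [e1, inner_add_right, inner_smul_right] at h1
    rw [e2, inner_smul_right, norm_smul, mul_pow, Real.norm_eq_abs, sq_abs] at h2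
    linear_combination h1 + h2 + t * e3
  have key : ∀ t : ℝ, 2 * t * ‖g x - g y‖ ^ 2 - M * t ^ 2 * ‖g x - g y‖ ^ 2
      ≤ inner ℝ (g x - g y) (x - y) := by
    intro t
    have h1 := half t x y
    have h2 := half t y x
    have e : inner ℝ (g x - g y) (x - y)
        = - inner ℝ (g x) (y - x) - inner ℝ (g y) (x - y) := by
      rw [← neg_sub x y, inner_neg_right, inner_sub_left]; ring
    rw [norm_sub_rev (g y) (g x)] at h2
    rw [e]
    linarith
  rcases hM.eq_or_lt with h0 | hpos
  · -- For `M = 0` the inequality `key` is linear in `t`, which forces `g x = g y`.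
    subst h0
    by_contra! hne
    have hN : 0 < ‖g x - g y‖ ^ 2 := by linarith
    have h1 := key (inner ℝ (g x - g y) (x - y) / ‖g x - g y‖ ^ 2)
    have h2 := key 1
    have : inner ℝ (g x - g y) (x - y) / ‖g x - g y‖ ^ 2 * ‖g x - g y‖ ^ 2
      = inner ℝ (g x - g y) (x - y) := div_mul_cancel₀ _ hN.ne'
    linarith
  · have h := mul_le_mul_of_nonneg_left (key (1 / M)) hM
    refine le_trans (le_of_eq ?_) h
    field_simp
    ring

variable [CompleteSpace E]

lemma hasDerivAt_line {G : E → ℝ} (hdiff : Differentiable ℝ G) (x d : E) (t : ℝ) :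
    HasDerivAt (fun s : ℝ => G (x + s • d)) (inner ℝ (gradient G (x + t • d)) d) t := by
  have h1 : HasDerivAt (fun s : ℝ => x + s • d) d t := by
    simpa using ((hasDerivAt_id t).smul_const d).const_add x
  have h2 := (hdiff (x + t • d)).hasGradientAt.hasFDerivAt.comp_hasDerivAt t h1
  exact h2

/-- The descent lemma: an `L`-smooth function lies below its tangent paraboloids. -/
lemma descent {G : E → ℝ} {L : ℝ} (hdiff : Differentiable ℝ G)
    (hsm : ∀ x y, ‖gradient G x - gradient G y‖ ≤ L * ‖x - y‖) (x z : E) :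
    G z ≤ G x + inner ℝ (gradient G x) (z - x) + L / 2 * ‖z - x‖ ^ 2 := by
  set d := z - x with hd
  -- The gap between the two sides is monotone along the segment from `x` to `z`.
  have hder : ∀ t : ℝ, HasDerivAt
      (fun s : ℝ => G (x + s • d) - s * inner ℝ (gradient G x) d - s ^ 2 * (L / 2 * ‖d‖ ^ 2))
      (inner ℝ (gradient G (x + t • d)) d - inner ℝ (gradient G x) d - 2 * t * (L / 2 * ‖d‖ ^ 2))
      t := by
    intro t
    have h2 := (hasDerivAt_id t).mul_const (inner ℝ (gradient G x) d)
    have h3 := ((hasDerivAt_id t).pow 2).mul_const (L / 2 * ‖d‖ ^ 2)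
    refine (((hasDerivAt_line hdiff x d t).sub h2).sub h3).congr_deriv ?_
    simp
  have hanti := antitoneOn_of_deriv_nonpos (convex_Icc (0 : ℝ) 1)
    (fun t _ => (hder t).continuousAt.continuousWithinAt)
    (fun t _ => (hder t).differentiableAt.differentiableWithinAt)
    (by
      intro t ht
      rw [interior_Icc] at ht
      rw [(hder t).deriv, ← inner_sub_left]
      have h1 := real_inner_le_norm (gradient G (x + t • d) - gradient G x) d
      have h2 := hsm (x + t • d) x
      rw [add_sub_cancel_left, norm_smul, Real.norm_eq_abs, abs_of_pos ht.1] at h2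
      have h3 := mul_le_mul_of_nonneg_right h2 (norm_nonneg d)
      linarith)
  have h := hanti (by simp) (by simp) (zero_le_one (α := ℝ))
  have hz : x + d = z := by simp [hd]
  simp only [one_smul, zero_smul, add_zero, hz] at h
  linarith

/-- The convex function `G - μ/2 ‖·‖²` lies above its tangent planes. -/
lemma tangent_le {G : E → ℝ} {μ : ℝ} (hdiff : Differentiable ℝ G)
    (hsc : ConvexOn ℝ Set.univ (fun x => G x - μ / 2 * ‖x‖ ^ 2)) (x z : E) :
    G x - μ / 2 * ‖x‖ ^ 2 + inner ℝ (gradient G x - μ • x) (z - x)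
      ≤ G z - μ / 2 * ‖z‖ ^ 2 := by
  set d := z - x with hd
  have hz : x + d = z := by simp [hd]
  have hconv : ConvexOn ℝ Set.univ
      (fun s : ℝ => G (x + s • d) - μ / 2 * ‖x + s • d‖ ^ 2) := by
    have h := hsc.comp_affineMap (AffineMap.lineMap x z : ℝ →ᵃ[ℝ] E)
    have e : ∀ s : ℝ, (AffineMap.lineMap x z : ℝ →ᵃ[ℝ] E) s = x + s • d := by
      intro s
      rw [AffineMap.lineMap_apply, vsub_eq_sub, vadd_eq_add, add_comm]
    simpa [Function.comp_def, e] using h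
  have hder : HasDerivAt (fun s : ℝ => G (x + s • d) - μ / 2 * ‖x + s • d‖ ^ 2)
      (inner ℝ (gradient G x - μ • x) d) 0 := by
    have h1 : HasDerivAt (fun s : ℝ => x + s • d) d 0 := by
      simpa using ((hasDerivAt_id (0 : ℝ)).smul_const d).const_add x
    refine ((hasDerivAt_line hdiff x d 0).sub (h1.norm_sq.const_mul (μ / 2))).congr_deriv ?_
    simp [inner_sub_left, inner_smul_left]
    ring
  have h := hconv.le_slope_of_hasDerivAt (Set.mem_univ 0) (Set.mem_univ 1) zero_lt_one hder
  simp [slope_def_field, hz] at h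
  linarith

end Aux


/-- If `G` is differentiable, `μ`-strongly convex and `L`-smooth with
`0 < μ ≤ L`, and `0 < η ≤ 2/(μ + L)`, then the gradient-step map `x ↦ x − η∇G(x)` is a
contraction with factor `1 − μη`. -/
theorem stmt9 {n : ℕ} (G : EuclideanSpace ℝ (Fin n) → ℝ) (μ L η : ℝ)
    (hμ : 0 < μ) (hμL : μ ≤ L)
    (hdiff : Differentiable ℝ G)
    (hsc : ConvexOn ℝ Set.univ (fun x => G x - μ / 2 * ‖x‖ ^ 2))
    (hsm : ∀ x y, ‖gradient G x - gradient G y‖ ≤ L * ‖x - y‖)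
    (hη : 0 < η) (hη2 : η ≤ 2 / (μ + L)) :
    ∀ x y : EuclideanSpace ℝ (Fin n),
      ‖(x - η • gradient G x) - (y - η • gradient G y)‖ ≤ (1 - μ * η) * ‖x - y‖ := by
  intro x y
  have hco := cocoercive_of_bounds (fun x => G x - μ / 2 * ‖x‖ ^ 2)
    (fun x => gradient G x - μ • x) (L - μ) (by linarith) (tangent_le hdiff hsc)
    (by
      intro x z
      have h := descent hdiff hsm x z
      have e : ‖z - x‖ ^ 2 = ‖z‖ ^ 2 - ‖x‖ ^ 2 - 2 * inner ℝ x (z - x) := by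
        rw [norm_sub_sq_real, inner_sub_right, real_inner_self_eq_norm_sq, real_inner_comm]
        ring
      simp only [inner_sub_left, real_inner_smul_left]
      linear_combination h + μ / 2 * e) x y
  have hmono : 0 ≤ inner ℝ ((gradient G x - μ • x) - (gradient G y - μ • y)) (x - y) := by
    have h1 := tangent_le hdiff hsc x y
    have h2 := tangent_le hdiff hsc y x
    rw [← neg_sub x y, inner_neg_right] at h1
    rw [inner_sub_left]
    linarith
  set e := (gradient G x - μ • x) - (gradient G y - μ • y) with he
  have hsplit : (x - η • gradient G x) - (y - η • gradient G y)
      = (1 - μ * η) • (x - y) - η • e := by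
    rw [he]; module
  have hstep : η * (μ + L) ≤ 2 := (le_div_iff₀ (by linarith)).mp hη2
  have hc : 0 ≤ 1 - μ * η := by nlinarith
  rw [hsplit]
  refine le_of_sq_le_sq ?_ (mul_nonneg hc (norm_nonneg _))
  rw [norm_sub_sq_real, norm_smul, norm_smul, real_inner_smul_left, real_inner_smul_right,
    Real.norm_of_nonneg hc, Real.norm_of_nonneg hη.le, real_inner_comm]
  have h1 : η * ‖e‖ ^ 2 ≤ 2 * (1 - μ * η) * inner ℝ e (x - y) := by
    have h2 := mul_le_mul_of_nonneg_left hco hη.le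
    have h3 := mul_le_mul_of_nonneg_right hstep hmono
    linarith
  have h2 := mul_le_mul_of_nonneg_left h1 hη.le
  linarith
end

section
/- Let Ω ∈ ℝ^{N×N} be a symmetric doubly-stochastic matrix with eigenvalues 1 = ρ_1 ≥ ρ_2 ≥ … ≥ ρ_N and ρ_2 < 1, and let Ω̂ = Ω ⊗ I_d. Let A ∈ ℝ^{Nd×Nd} be symmetric with μ·I_{Nd} ⪯ A ⪯ L·I_{Nd} for some 0 < μ ≤ L, let c > 0, and set B = A + c·(I_{Nd} − Ω̂). Then B is invertible (indeed B ⪰ μ·I_{Nd}), and for every unit vector v ∈ ℝ^{Nd} orthogonal to the consensus subspace {𝟙 ⊗ u : u ∈ ℝ^d}, it holds that ‖B^{−1}v‖ ≤ 2√(1 + L/μ)/(c·(1 − ρ_2)). -/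
open Kronecker Matrix

/-!
Put `x = B⁻¹ v` and split `x = a + b` with `a = 𝟙 ⊗ u` the blockwise mean of `x` and `b`
orthogonal to the consensus subspace. Since `(I − Ω̂) a = 0`, the spectral gap gives
`⟨x, (I − Ω̂) x⟩ = ⟨b, (I − Ω̂) b⟩ ≥ (1 − ρ₂) ‖b‖²` (`laplacian_quad`), which already yields
`B ⪰ μ I`.

Testing `B x = v` against `x` gives `c (1 − ρ₂) ‖b‖² ≤ ⟨x, v⟩ = ⟨b, v⟩ ≤ ‖b‖`, hence
`‖b‖ ≤ 1 / (c (1 − ρ₂))`. Testing against `a` gives `⟨a, A x⟩ = 0`, so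
`0 ≤ ⟨x, A x⟩ = ⟨b, A b⟩ − ⟨a, A a⟩` and `μ ‖a‖² ≤ L ‖b‖²`. Therefore
`‖x‖² = ‖a‖² + ‖b‖² ≤ (1 + L/μ) ‖b‖²`, which proves the bound even without the factor 2.
-/

lemma symm_dot {n : Type*} [Fintype n] {M : Matrix n n ℝ} (hM : M.IsSymm) (x y : n → ℝ) :
    x ⬝ᵥ M *ᵥ y = y ⬝ᵥ M *ᵥ x := by
  rw [dotProduct_mulVec, ← mulVec_transpose, hM.eq, dotProduct_comm]

lemma kron_one_mulVec {N d : ℕ} (Ω : Matrix (Fin N) (Fin N) ℝ) (w : Fin N × Fin d → ℝ)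
    (p : Fin N × Fin d) :
    ((Ω ⊗ₖ (1 : Matrix (Fin d) (Fin d) ℝ)) *ᵥ w) p = (Ω *ᵥ fun j => w (j, p.2)) p.1 := by
  simp [mulVec, dotProduct, Fintype.sum_prod_type, one_apply]

lemma kron_one_isSymm {N d : ℕ} {Ω : Matrix (Fin N) (Fin N) ℝ} (h : Ω.IsSymm) :
    (Ω ⊗ₖ (1 : Matrix (Fin d) (Fin d) ℝ)).IsSymm := by
  ext ⟨i, k⟩ ⟨j, l⟩
  simp [one_apply, h.apply i j, eq_comm]

/-- Splitting of a stacked vector into a consensus part `𝟙 ⊗ u` and a part whose blocks sum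
to zero. -/
lemma exists_split {N d : ℕ} (x : Fin N × Fin d → ℝ) :
    ∃ (u : Fin d → ℝ) (b : Fin N × Fin d → ℝ),
      x = (fun p => u p.2) + b ∧ ∀ k, ∑ i, b (i, k) = 0 := by
  refine ⟨fun k => (∑ i, x (i, k)) / N, fun p => x p - (∑ i, x (i, p.2)) / N, ?_, ?_⟩
  · ext p
    simp
  · intro k
    rcases Nat.eq_zero_or_pos N with rfl | hN
    · simp
    · have : (N : ℝ) ≠ 0 := by positivity
      simp only [Finset.sum_sub_distrib, Finset.sum_const, Finset.card_univ, Fintype.card_fin,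
        nsmul_eq_mul]
      field_simp
      ring

lemma laplacian_consensus {N d : ℕ} {Ω : Matrix (Fin N) (Fin N) ℝ}
    (hrow : ∀ i, ∑ j, Ω i j = 1) (u : Fin d → ℝ) :
    (1 - Ω ⊗ₖ (1 : Matrix (Fin d) (Fin d) ℝ)) *ᵥ (fun p : Fin N × Fin d => u p.2) = 0 := by
  ext p
  rw [sub_mulVec, one_mulVec, Pi.sub_apply, kron_one_mulVec]
  simp [mulVec, dotProduct, ← Finset.sum_mul, hrow]

/-- The spectral gap of `Ω`, applied to each of the `d` coordinate slices of `b`. -/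
lemma laplacian_gap {N d : ℕ} {Ω : Matrix (Fin N) (Fin N) ℝ} {ρ2 : ℝ}
    (hray : ∀ v : Fin N → ℝ, ∑ i, v i = 0 → v ⬝ᵥ Ω.mulVec v ≤ ρ2 * (v ⬝ᵥ v))
    {b : Fin N × Fin d → ℝ} (hb : ∀ k, ∑ i, b (i, k) = 0) :
    (1 - ρ2) * (b ⬝ᵥ b) ≤ b ⬝ᵥ (1 - Ω ⊗ₖ (1 : Matrix (Fin d) (Fin d) ℝ)) *ᵥ b := by
  have h : b ⬝ᵥ (Ω ⊗ₖ (1 : Matrix (Fin d) (Fin d) ℝ)) *ᵥ b ≤ ρ2 * (b ⬝ᵥ b) := by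
    have e1 : b ⬝ᵥ (Ω ⊗ₖ (1 : Matrix (Fin d) (Fin d) ℝ)) *ᵥ b
        = ∑ k, (fun i => b (i, k)) ⬝ᵥ Ω *ᵥ fun i => b (i, k) := by
      simp only [dotProduct, kron_one_mulVec, Fintype.sum_prod_type]
      exact Finset.sum_comm
    have e2 : b ⬝ᵥ b = ∑ k, (fun i => b (i, k)) ⬝ᵥ fun i => b (i, k) := by
      simp only [dotProduct, Fintype.sum_prod_type]
      exact Finset.sum_comm
    rw [e1, e2, Finset.mul_sum]
    exact Finset.sum_le_sum fun k _ => hray _ (hb k)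
  rw [sub_mulVec, one_mulVec, dotProduct_sub]
  linarith

/-- The consensus part does not contribute to the quadratic form of `I − Ω̂`. -/
lemma laplacian_quad {N d : ℕ} {Ω : Matrix (Fin N) (Fin N) ℝ} (hsymm : Ω.IsSymm)
    (hrow : ∀ i, ∑ j, Ω i j = 1) {ρ2 : ℝ}
    (hray : ∀ v : Fin N → ℝ, ∑ i, v i = 0 → v ⬝ᵥ Ω.mulVec v ≤ ρ2 * (v ⬝ᵥ v))
    (u : Fin d → ℝ) {b : Fin N × Fin d → ℝ} (hb : ∀ k, ∑ i, b (i, k) = 0) :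
    (1 - ρ2) * (b ⬝ᵥ b) ≤ ((fun p => u p.2) + b) ⬝ᵥ
      (1 - Ω ⊗ₖ (1 : Matrix (Fin d) (Fin d) ℝ)) *ᵥ ((fun p => u p.2) + b) := by
  have hM : (1 - Ω ⊗ₖ (1 : Matrix (Fin d) (Fin d) ℝ)).IsSymm :=
    isSymm_one.sub (kron_one_isSymm hsymm)
  have h := laplacian_gap hray hb
  rw [mulVec_add, laplacian_consensus hrow, zero_add, add_dotProduct, symm_dot hM _ b,
    laplacian_consensus hrow, dotProduct_zero, zero_add]
  exact h

lemma dot_self_nonneg {n : Type*} [Fintype n] (x : n → ℝ) : 0 ≤ x ⬝ᵥ x :=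
  Finset.sum_nonneg fun i _ => mul_self_nonneg (x i)

lemma dot_sq_le {n : Type*} [Fintype n] (x y : n → ℝ) :
    (x ⬝ᵥ y) ^ 2 ≤ (x ⬝ᵥ x) * (y ⬝ᵥ y) := by
  simpa [dotProduct, pow_two] using Finset.sum_mul_sq_le_sq_mul_sq Finset.univ x y

/-- Let `Ω` be symmetric doubly stochastic with second-largest
eigenvalue `ρ₂ < 1` (expressed by the Rayleigh-quotient bound on the orthogonal
complement of the all-ones vector), `Ω̂ = Ω ⊗ I_d`, `A` symmetric with
`μI ⪯ A ⪯ LI` (`0 < μ ≤ L`), `c > 0`, and `B = A + c(I − Ω̂)`. Then `B ⪰ μI`, `B` is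
invertible, and for every unit vector `v` orthogonal to the consensus subspace
`{𝟙 ⊗ u}`, `‖B⁻¹v‖ ≤ 2√(1 + L/μ)/(c(1 − ρ₂))`. -/
theorem stmt13 {N d : ℕ} (Ω : Matrix (Fin N) (Fin N) ℝ)
    (hsymm : Ω.IsSymm) (hnn : ∀ i j, 0 ≤ Ω i j)
    (hrow : ∀ i, ∑ j, Ω i j = 1) (hcol : ∀ j, ∑ i, Ω i j = 1)
    (ρ2 : ℝ) (hρ2 : ρ2 < 1)
    (hray : ∀ v : Fin N → ℝ, ∑ i, v i = 0 → v ⬝ᵥ Ω.mulVec v ≤ ρ2 * (v ⬝ᵥ v))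
    (A : Matrix (Fin N × Fin d) (Fin N × Fin d) ℝ) (hA : A.IsSymm)
    (μ L : ℝ) (hμ : 0 < μ) (hμL : μ ≤ L)
    (hAlow : (A - μ • 1).PosSemidef) (hAup : (L • (1 : Matrix (Fin N × Fin d) (Fin N × Fin d) ℝ) - A).PosSemidef)
    (c : ℝ) (hc : 0 < c) :
    let Ωhat : Matrix (Fin N × Fin d) (Fin N × Fin d) ℝ :=
      Ω ⊗ₖ (1 : Matrix (Fin d) (Fin d) ℝ)
    let B := A + c • ((1 : Matrix (Fin N × Fin d) (Fin N × Fin d) ℝ) - Ωhat)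
    (B - μ • 1).PosSemidef ∧ IsUnit B ∧
      ∀ v : Fin N × Fin d → ℝ, v ⬝ᵥ v = 1 →
        (∀ u : Fin d → ℝ, v ⬝ᵥ (fun p : Fin N × Fin d => u p.2) = 0) →
        Real.sqrt (B⁻¹.mulVec v ⬝ᵥ B⁻¹.mulVec v) ≤
          2 * Real.sqrt (1 + L / μ) / (c * (1 - ρ2)) := by
  intro Ωhat B
  have hM : (1 - Ωhat).IsSymm := isSymm_one.sub (kron_one_isSymm hsymm)
  have hgap : 0 < 1 - ρ2 := by linarith
  have hMnn : ∀ x, 0 ≤ x ⬝ᵥ (1 - Ωhat) *ᵥ x := by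
    intro x
    obtain ⟨u, b, rfl, hb⟩ := exists_split x
    exact le_trans (mul_nonneg hgap.le (dot_self_nonneg b))
      (laplacian_quad hsymm hrow hray u hb)
  have hMpsd : (1 - Ωhat).PosSemidef :=
    .of_dotProduct_mulVec_nonneg
      ((conjTranspose_eq_transpose_of_trivial _).trans hM.eq) (by simpa using hMnn)
  have hBpsd : (B - μ • 1).PosSemidef := by
    have h := hAlow.add (hMpsd.smul hc.le)
    have e : B - μ • 1 = A - μ • 1 + c • (1 - Ωhat) := by
      simp only [B]
      abel
    rwa [e]
  have hBunit : IsUnit B := by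
    have h := (PosDef.one (n := Fin N × Fin d) (R := ℝ)).smul hμ
    have h2 := h.posSemidef_add hBpsd
    rw [sub_add_cancel] at h2
    exact h2.isUnit
  refine ⟨hBpsd, hBunit, fun v hv hvc => ?_⟩
  have hAl : ∀ x, μ * (x ⬝ᵥ x) ≤ x ⬝ᵥ A *ᵥ x := by
    intro x
    have h := hAlow.dotProduct_mulVec_nonneg x
    simp only [star_trivial, sub_mulVec, smul_mulVec, one_mulVec, dotProduct_sub,
      dotProduct_smul, smul_eq_mul] at h
    linarith
  have hAu : ∀ x, x ⬝ᵥ A *ᵥ x ≤ L * (x ⬝ᵥ x) := by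
    intro x
    have h := hAup.dotProduct_mulVec_nonneg x
    simp only [star_trivial, sub_mulVec, smul_mulVec, one_mulVec, dotProduct_sub,
      dotProduct_smul, smul_eq_mul] at h
    linarith
  have hx : B *ᵥ (B⁻¹ *ᵥ v) = v := by
    rw [mulVec_mulVec, mul_nonsing_inv _ ((isUnit_iff_isUnit_det B).1 hBunit), one_mulVec]
  generalize B⁻¹ *ᵥ v = x at hx ⊢
  obtain ⟨u, b, rfl, hb⟩ := exists_split x
  have hquad := laplacian_quad hsymm hrow hray u hb
  have hMa : (1 - Ωhat) *ᵥ (fun p : Fin N × Fin d => u p.2) = 0 := laplacian_consensus hrow u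
  have hav := hvc u
  have hab : (fun p : Fin N × Fin d => u p.2) ⬝ᵥ b = 0 := by
    simp only [dotProduct, Fintype.sum_prod_type]
    rw [Finset.sum_comm]
    simp [← Finset.mul_sum, hb]
  change _ ≤ _ ⬝ᵥ (1 - Ωhat) *ᵥ _ at hquad
  generalize (fun p : Fin N × Fin d => u p.2) = a at *
  have hsplit : ∀ y, y ⬝ᵥ A *ᵥ (a + b) + c * (y ⬝ᵥ (1 - Ωhat) *ᵥ (a + b)) = y ⬝ᵥ v := by
    intro y
    rw [← hx]
    simp only [B, add_mulVec A, smul_mulVec, dotProduct_add, dotProduct_smul, smul_eq_mul]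
  have htest_a : a ⬝ᵥ A *ᵥ (a + b) = 0 := by
    have h := hsplit a
    rw [symm_dot hM, hMa, dotProduct_zero, mul_zero, add_zero, dotProduct_comm a v, hav] at h
    exact h
  have htest_x := hsplit (a + b)
  rw [add_dotProduct a b v, dotProduct_comm a v, hav, zero_add] at htest_x
  have hxAx : 0 ≤ (a + b) ⬝ᵥ A *ᵥ (a + b) :=
    le_trans (mul_nonneg hμ.le (dot_self_nonneg _)) (hAl _)
  set s := b ⬝ᵥ b with hs
  have hs0 : 0 ≤ s := dot_self_nonneg b
  have hκ : 0 < c * (1 - ρ2) := mul_pos hc hgap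
  have hbv : c * (1 - ρ2) * s ≤ b ⬝ᵥ v := by
    have := mul_le_mul_of_nonneg_left hquad hc.le
    linarith
  have hcs : (b ⬝ᵥ v) ^ 2 ≤ s := by
    have := dot_sq_le b v
    rwa [hv, mul_one] at this
  have hsb : (c * (1 - ρ2)) ^ 2 * s ≤ 1 := by
    have h1 : (c * (1 - ρ2) * s) ^ 2 ≤ s :=
      (pow_le_pow_left₀ (mul_nonneg hκ.le hs0) hbv 2).trans hcs
    rcases hs0.eq_or_lt with h0 | h0
    · rw [← h0]
      simp
    · refine le_of_mul_le_mul_right ?_ h0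
      linarith [h1, mul_pow (c * (1 - ρ2)) s 2, pow_two s,
        mul_assoc ((c * (1 - ρ2)) ^ 2) s s]
  have haa : μ * (a ⬝ᵥ a) ≤ L * s := by
    have h1 := hAl a
    have h2 := hAu b
    have h3 := symm_dot hA a b
    rw [mulVec_add, dotProduct_add] at htest_a
    simp only [mulVec_add, dotProduct_add, add_dotProduct] at hxAx
    linarith
  have hnorm : (a + b) ⬝ᵥ (a + b) ≤ (1 + L / μ) * s := by
    have e : (a + b) ⬝ᵥ (a + b) = a ⬝ᵥ a + s := by
      simp only [dotProduct_add, add_dotProduct, dotProduct_comm b a, hab, hs]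
      ring
    have : a ⬝ᵥ a ≤ L / μ * s := by
      rw [div_mul_eq_mul_div, le_div_iff₀ hμ]
      linarith
    rw [e]
    linarith
  have hK : 0 ≤ 1 + L / μ := by
    have : 0 ≤ L / μ := div_nonneg (hμ.le.trans hμL) hμ.le
    linarith
  rw [le_div_iff₀ hκ]
  have hle : Real.sqrt ((a + b) ⬝ᵥ (a + b)) * (c * (1 - ρ2)) ≤ Real.sqrt (1 + L / μ) := by
    apply Real.le_sqrt_of_sq_le
    rw [mul_pow, Real.sq_sqrt (dot_self_nonneg _)]
    calc (a + b) ⬝ᵥ (a + b) * (c * (1 - ρ2)) ^ 2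
        ≤ (1 + L / μ) * s * (c * (1 - ρ2)) ^ 2 := by gcongr
      _ = (1 + L / μ) * ((c * (1 - ρ2)) ^ 2 * s) := by ring
      _ ≤ (1 + L / μ) * 1 := by gcongr
      _ = 1 + L / μ := mul_one _
  linarith [Real.sqrt_nonneg (1 + L / μ)]
end
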